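/- Let 0 < a_1 < b_1 < a_2 < b_2 and let 0 < δ be such that a_1 + δ < b_1, b_2 − δ > a_2 and δ < b_1 − a_1. Let E = {ξ ∈ ℝ^{2×2} : (λ_1(ξ), λ_2(ξ)) ∈ {(a_1, a_2), (b_1, b_2)}, det ξ > 0} and E_δ = {ξ ∈ ℝ^{2×2} : (λ_1(ξ), λ_2(ξ)) ∈ {(a_1 + δ, a_2), (b_1, b_2 − δ)}, det ξ > 0}. Then Rco_f E_δ ⊂ int Rco_f E. -/

import Mathlib

open MeasureTheory Filter

attribute [local instance] Classical.propDecidable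
attribute [local instance] Matrix.frobeniusNormedAddCommGroup Matrix.frobeniusNormedSpace

noncomputable section

/-- The space of real `N × n` matrices. -/
abbrev Mat (N n : ℕ) : Type := Matrix (Fin N) (Fin n) ℝ

/-- A function `f : ℝ^{N×n} → ℝ` is rank one convex. -/
def RankOneConvexFun {N n : ℕ} (f : Mat N n → ℝ) : Prop :=
  ∀ lam ∈ Set.Icc (0:ℝ) 1, ∀ ξ η : Mat N n, (ξ - η).rank = 1 →
    f (lam • ξ + (1 - lam) • η) ≤ lam * f ξ + (1 - lam) * f η

/-- The hull `Rco_f E`. -/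
def RcoF {N n : ℕ} (E : Set (Mat N n)) : Set (Mat N n) :=
  {ξ | ∀ f : Mat N n → ℝ, RankOneConvexFun f → (∀ η ∈ E, f η ≤ 0) → f ξ ≤ 0}

/-- A set of matrices is rank one convex. -/
def RankOneConvexSet {N n : ℕ} (S : Set (Mat N n)) : Prop :=
  ∀ A ∈ S, ∀ B ∈ S, (A - B).rank = 1 → ∀ t ∈ Set.Icc (0:ℝ) 1, t • A + (1 - t) • B ∈ S

/-- The property `(H_I(U))`, phrased on lists of (weight, matrix) pairs. -/
inductive HIProp {N n : ℕ} (U : Set (Mat N n)) : List (ℝ × Mat N n) → Prop where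
  | single (l : ℝ) (ξ : Mat N n) (hξ : ξ ∈ U) : HIProp U [(l, ξ)]
  | pair (l₁ l₂ : ℝ) (ξ₁ ξ₂ : Mat N n) (h₁ : ξ₁ ∈ U) (h₂ : ξ₂ ∈ U)
      (hrank : (ξ₁ - ξ₂).rank = 1) : HIProp U [(l₁, ξ₁), (l₂, ξ₂)]
  | step (L rest : List (ℝ × Mat N n)) (l₁ l₂ : ℝ) (ξ₁ ξ₂ : Mat N n)
      (hperm : L.Perm ((l₁, ξ₁) :: (l₂, ξ₂) :: rest)) (hrest : rest ≠ [])
      (h₁ : ξ₁ ∈ U) (h₂ : ξ₂ ∈ U) (hrank : (ξ₁ - ξ₂).rank = 1)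
      (hrec : HIProp U ((l₁ + l₂, ((l₁ + l₂)⁻¹) • (l₁ • ξ₁ + l₂ • ξ₂)) :: rest)) :
      HIProp U L

/-- The family `(λ_i, ξ_i)_{1 ≤ i ≤ I}` satisfies `(H_I(U))`. -/
def SatisfiesH {N n : ℕ} (U : Set (Mat N n)) (I : ℕ) (l : Fin I → ℝ)
    (ξ : Fin I → Mat N n) : Prop :=
  HIProp U (List.ofFn fun i => (l i, ξ i))

/-- The gradient of a map `u : ℝ^n → ℝ^N`, as an `N × n` matrix. -/
def matGrad {N n : ℕ} (u : (Fin n → ℝ) → Fin N → ℝ) (x : Fin n → ℝ) : Mat N n :=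
  LinearMap.toMatrix' (fderiv ℝ u x).toLinearMap

/-- `u` is affine on the set `s`. -/
def AffineOn {N n : ℕ} (u : (Fin n → ℝ) → Fin N → ℝ) (s : Set (Fin n → ℝ)) : Prop :=
  ∃ (A : Mat N n) (b : Fin N → ℝ), ∀ x ∈ s, u x = A.mulVec x + b

/-- `u` is piecewise affine on the open set `Ω`. -/
def PiecewiseAffineOn {N n : ℕ} (u : (Fin n → ℝ) → Fin N → ℝ)
    (Ω : Set (Fin n → ℝ)) : Prop :=
  ContinuousOn u (closure Ω) ∧
  ∃ P : ℕ → Set (Fin n → ℝ),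
    (∀ k, IsOpen (P k)) ∧ (∀ k, P k ⊆ Ω) ∧
    (∀ k l, k ≠ l → Disjoint (P k) (P l)) ∧
    volume (Ω \ ⋃ k, P k) = 0 ∧ ∀ k, AffineOn u (P k)

/-- `u` is piecewise `C¹` on the open set `Ω`. -/
def PiecewiseC1On {N n : ℕ} (u : (Fin n → ℝ) → Fin N → ℝ)
    (Ω : Set (Fin n → ℝ)) : Prop :=
  ContinuousOn u (closure Ω) ∧
  ∃ P : ℕ → Set (Fin n → ℝ),
    (∀ k, IsOpen (P k)) ∧ (∀ k, P k ⊆ Ω) ∧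
    (∀ k l, k ≠ l → Disjoint (P k) (P l)) ∧
    volume (Ω \ ⋃ k, P k) = 0 ∧ ∀ k, ContDiffOn ℝ 1 u (P k)

/-- `u ∈ φ + W₀^{1,∞}(Ω; ℝ^N)`: `u` is Lipschitz on `closure Ω` and agrees with `φ`
on the boundary of `Ω`. -/
def MemW01inf {N n : ℕ} (Ω : Set (Fin n → ℝ)) (φ u : (Fin n → ℝ) → Fin N → ℝ) : Prop :=
  (∃ C : NNReal, LipschitzOnWith C u (closure Ω)) ∧ ∀ x ∈ frontier Ω, u x = φ x

/-- `K` has the relaxation property with respect to `E`. -/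
def HasRelaxationProperty {N n : ℕ} (K E : Set (Mat N n)) : Prop :=
  ∀ Ω : Set (Fin n → ℝ), IsOpen Ω → Bornology.IsBounded Ω →
    ∀ ξ ∈ K, ∀ b : Fin N → ℝ,
      ∃ u : ℕ → (Fin n → ℝ) → Fin N → ℝ,
        (∀ ν, PiecewiseAffineOn (u ν) Ω) ∧
        (∀ ν, MemW01inf Ω (fun x => ξ.mulVec x + b) (u ν)) ∧
        (∀ ν, ∀ᵐ x ∂(volume.restrict Ω), matGrad (u ν) x ∈ E ∪ K) ∧
        (∃ C : NNReal, ∀ ν, LipschitzOnWith C (u ν) (closure Ω)) ∧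
        TendstoUniformlyOn u (fun x => ξ.mulVec x + b) atTop (closure Ω) ∧
        Tendsto (fun ν => ∫ x in Ω, Metric.infDist (matGrad (u ν) x) E) atTop (nhds 0)

/-- The singular values of a square matrix, in nondecreasing order:
the square roots of the eigenvalues of `ξ ξᵀ`, sorted. -/
def singularValues {n : ℕ} (ξ : Matrix (Fin n) (Fin n) ℝ) (i : Fin n) : ℝ :=
  Real.sqrt ((Matrix.isHermitian_mul_conjTranspose_self ξ).eigenvalues
    (Tuple.sort (Matrix.isHermitian_mul_conjTranspose_self ξ).eigenvalues i))

end

section Statements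

open Metric Set

/-!
The hull `RcoF` commutes with translations. So if `K ⊆ interior (RcoF S)` is compact, then all
small translates of `K` lie in `RcoF S`, and `RcoF K ⊆ interior (RcoF S)`. As `Eδ` is compact, it
remains to see that `Eδ ⊆ interior (RcoF E)`.

Let `μ₁, μ₂` be the singular values of `ξ`, the smaller one carrying the sign of `det ξ`, and let
`P(k) = (k - μ₁) (k - μ₂)`. If `P(k) ≤ 0`, there is a rank one line through `ξ` at whose
parameter `t` the determinant is `μ₁ μ₂ + t k` and the sum of the signed singular values is
`|μ₁ + μ₂ + t|`. For `k > 0` follow it in both directions until the determinant is `a₁ a₂` or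
`b₁ b₂`. If `(k - a₁) (k - a₂) ≤ P(k)` and `(k - b₁) (k - b₂) ≤ P(k)`, then at these
two matrices the sum of the singular values is at most `a₁ + a₂`, respectively `b₁ + b₂`; moving
along a shear, which preserves `det`, writes each of them as a rank one convex combination of
elements of `E`. With strict inequalities these conditions on `ξ` are open. They hold on `Eδ`: take
`k` slightly below `a₂` for the singular values `(a₁ + δ, a₂)`, and slightly above `b₁` for
`(b₁, b₂ - δ)`.
-/

section Hull

variable {N n : ℕ} {S T K : Set (Mat N n)}

lemma subset_RcoF : S ⊆ RcoF S := fun _ hξ _ _ hS => hS _ hξ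

lemma RcoF_mono (h : S ⊆ T) : RcoF S ⊆ RcoF T :=
  fun _ hξ f hf hT => hξ f hf fun _ hη => hT _ (h hη)

lemma rankOneConvexSet_RcoF (S : Set (Mat N n)) : RankOneConvexSet (RcoF S) := by
  intro A hA B hB hrank t ht f hf hS
  have hAt : t * f A ≤ 0 := mul_nonpos_of_nonneg_of_nonpos ht.1 (hA f hf hS)
  have hBt : (1 - t) * f B ≤ 0 :=
    mul_nonpos_of_nonneg_of_nonpos (sub_nonneg.2 ht.2) (hB f hf hS)
  linarith [hf t ht A B hrank]

lemma RankOneConvexSet.mem_of_add_smul_mem (hS : RankOneConvexSet S) {ξ D : Mat N n}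
    (hD : D.rank = 1) {s t : ℝ} (hs : s ≤ 0) (ht : 0 ≤ t) (hξs : ξ + s • D ∈ S)
    (hξt : ξ + t • D ∈ S) : ξ ∈ S := by
  rcases (hs.trans ht).eq_or_lt with rfl | hst
  · simpa [le_antisymm hs ht] using hξs
  have hpos : 0 < t - s := sub_pos.2 hst
  have hrank : ((ξ + s • D) - (ξ + t • D)).rank = 1 := by
    rw [add_sub_add_left_eq_sub, ← sub_smul,
      Matrix.rank_smul_of_mem_nonZeroDivisors _ (mem_nonZeroDivisors_of_ne_zero (by linarith)), hD]
  have hmem : t / (t - s) ∈ Icc (0 : ℝ) 1 :=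
    ⟨by positivity, (div_le_one hpos).2 (by linarith)⟩
  convert hS _ hξs _ hξt hrank _ hmem using 1
  match_scalars <;> field_simp <;> ring

lemma RankOneConvexFun.comp_add_right {f : Mat N n → ℝ} (hf : RankOneConvexFun f) (c : Mat N n) :
    RankOneConvexFun fun ξ => f (ξ + c) := by
  intro t ht ξ η hrank
  convert hf t ht (ξ + c) (η + c) (by rwa [add_sub_add_right_eq_sub]) using 2
  module

lemma add_mem_RcoF {c ξ : Mat N n} (h : ∀ η ∈ S, η + c ∈ RcoF T) (hξ : ξ ∈ RcoF S) :
    ξ + c ∈ RcoF T :=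
  fun f hf hT => hξ (fun η => f (η + c)) (hf.comp_add_right c) fun η hη => h η hη f hf hT

lemma RcoF_subset_interior_RcoF_of_isCompact (hK : IsCompact K) (h : K ⊆ interior (RcoF S)) :
    RcoF K ⊆ interior (RcoF S) := by
  obtain ⟨V, hV, hKV⟩ := compact_open_separated_add_right hK isOpen_interior h
  intro ξ hξ
  have hsub : ∀ᶠ η in nhds ξ, η - ξ ∈ V :=
    (continuous_sub_right ξ).continuousAt.eventually_mem (by rwa [sub_self])
  rw [mem_interior_iff_mem_nhds]
  filter_upwards [hsub] with η hη
  rw [← add_sub_cancel ξ η]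
  exact add_mem_RcoF (fun ζ hζ => interior_subset (hKV (add_mem_add hζ hη))) hξ

end Hull

section SingularValues

variable {n : ℕ} (ξ : Matrix (Fin n) (Fin n) ℝ)

lemma singularValues_nonneg (i : Fin n) : 0 ≤ singularValues ξ i := Real.sqrt_nonneg _

lemma singularValues_monotone : Monotone (singularValues ξ) :=
  fun _ _ hij => Real.sqrt_le_sqrt
    (Tuple.monotone_sort (Matrix.isHermitian_mul_conjTranspose_self ξ).eigenvalues hij)

lemma singularValues_sq (i : Fin n) :
    singularValues ξ i ^ 2 = (Matrix.isHermitian_mul_conjTranspose_self ξ).eigenvalues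
      (Tuple.sort (Matrix.isHermitian_mul_conjTranspose_self ξ).eigenvalues i) :=
  Real.sq_sqrt ((Matrix.posSemidef_self_mul_conjTranspose ξ).eigenvalues_nonneg _)

lemma sum_singularValues_sq : ∑ i, singularValues ξ i ^ 2 = ∑ i, ∑ j, ξ i j ^ 2 := by
  have htrace := (Matrix.isHermitian_mul_conjTranspose_self ξ).trace_eq_sum_eigenvalues
  simp only [singularValues_sq, Equiv.sum_comp]
  simpa [Matrix.trace, Matrix.mul_apply, ← sq] using htrace.symm

lemma prod_singularValues : ∏ i, singularValues ξ i = |ξ.det| := by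
  have hdet := (Matrix.isHermitian_mul_conjTranspose_self ξ).det_eq_prod_eigenvalues
  rw [← sq_eq_sq₀ (Finset.prod_nonneg fun i _ => singularValues_nonneg ξ i) (abs_nonneg _),
    ← Finset.prod_pow]
  simp only [singularValues_sq, Equiv.prod_comp]
  simpa [sq] using hdet.symm

end SingularValues

section RankOne

variable {K : Type*} [Field K]

lemma rank_ne_zero_of_ne_zero {m n : Type*} [Fintype n] {A : Matrix m n K} (hA : A ≠ 0) :
    A.rank ≠ 0 := by
  classical
  rwa [Matrix.rank, ne_eq, Submodule.finrank_eq_zero, LinearMap.range_eq_bot,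
    ← Matrix.toLin'_apply', LinearEquiv.map_eq_zero_iff]

lemma rank_eq_one_of_det_eq_zero {D : Matrix (Fin 2) (Fin 2) K} (hD : D ≠ 0)
    (hdet : D.det = 0) : D.rank = 1 := by
  have hadj : D.adjugate ≠ 0 := fun h =>
    hD (by simpa [h] using (D.adjugate_adjugate (by simp)).symm)
  have hle : D.rank + D.adjugate.rank ≤ 2 := Matrix.rank_add_rank_le_card_of_mul_eq_zero
    (by rw [Matrix.mul_adjugate, hdet, zero_smul])
  have hpos := rank_ne_zero_of_ne_zero hD
  have hpos_adj := rank_ne_zero_of_ne_zero hadj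
  omega

end RankOne

lemma exists_nonpos_nonneg_roots {a b c : ℝ} (ha : 0 < a) (hc : c ≤ 0) :
    ∃ s ≤ 0, ∃ t ≥ 0, a * (s * s) + b * s + c = 0 ∧ a * (t * t) + b * t + c = 0 := by
  have hac : a * c ≤ 0 := mul_nonpos_of_nonneg_of_nonpos ha.le hc
  have hdiscrim : b ^ 2 ≤ discrim a b c := by rw [discrim]; linarith
  have hsqrt : discrim a b c = √(discrim a b c) * √(discrim a b c) :=
    (Real.mul_self_sqrt ((sq_nonneg b).trans hdiscrim)).symm
  obtain ⟨hneg, hle⟩ := abs_le.1 (Real.abs_le_sqrt hdiscrim)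
  exact ⟨_, div_nonpos_of_nonpos_of_nonneg (by linarith) (by positivity),
    _, div_nonneg (by linarith) (by positivity),
    (quadratic_eq_zero_iff ha.ne' hsqrt _).2 (Or.inr rfl),
    (quadratic_eq_zero_iff ha.ne' hsqrt _).2 (Or.inl rfl)⟩

lemma exists_unit_vector_inner_eq {x y c : ℝ} (hc : c ^ 2 ≤ x ^ 2 + y ^ 2) :
    ∃ u v : ℝ, u ^ 2 + v ^ 2 = 1 ∧ x * u + y * v = c := by
  rcases (add_nonneg (sq_nonneg x) (sq_nonneg y)).eq_or_lt with h | h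
  · have hx : x = 0 := by nlinarith
    have hy : y = 0 := by nlinarith
    have hc0 : c = 0 := by nlinarith
    exact ⟨1, 0, by norm_num, by simp [hx, hy, hc0]⟩
  · set d := √(x ^ 2 + y ^ 2 - c ^ 2)
    have hd : d ^ 2 = x ^ 2 + y ^ 2 - c ^ 2 := Real.sq_sqrt (sub_nonneg.2 hc)
    refine ⟨(c * x - d * y) / (x ^ 2 + y ^ 2), (c * y + d * x) / (x ^ 2 + y ^ 2), ?_, ?_⟩
    · field_simp
      linear_combination (x ^ 2 + y ^ 2) * hd
    · field_simp
      ring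

lemma eq_and_eq_iff_mul_eq_and_add_eq {s t x y : ℝ} (hst : s ≤ t) (hxy : x ≤ y) :
    s = x ∧ t = y ↔ s * t = x * y ∧ s + t = x + y := by
  constructor
  · rintro ⟨rfl, rfl⟩
    exact ⟨rfl, rfl⟩
  · rintro ⟨hmul, hadd⟩
    have hsub : t - s = y - x := by
      rw [← sq_eq_sq₀ (sub_nonneg.2 hst) (sub_nonneg.2 hxy)]
      linear_combination (s + t + x + y) * hadd - 4 * hmul
    constructor <;> linarith

section SignedSingularValues

/-- The sum `μ₁ + μ₂` of the signed singular values `μ₁ = (sign det ξ) λ₁(ξ)` and `μ₂ = λ₂(ξ)`.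
It is encoded as the length of twice the conformal part of `ξ`, which makes its behaviour along
lines computable. -/
noncomputable def signedSingularSum (ξ : Mat 2 2) : ℝ :=
  √((ξ 0 0 + ξ 1 1) ^ 2 + (ξ 1 0 - ξ 0 1) ^ 2)

/-- The value at `k` of the monic quadratic polynomial whose roots are the signed singular values
of `ξ`; its sign decides whether `k` is the slope of `det` along some normalised rank one line
through `ξ`. -/
noncomputable def signedSingularPoly (ξ : Mat 2 2) (k : ℝ) : ℝ :=
  k ^ 2 - signedSingularSum ξ * k + ξ.det

/-- The matrices with signed singular values `x` and `y` (none if `x + y < 0`); for `0 < x ≤ y`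
these are the matrices of positive determinant with singular values `x` and `y`. -/
def well (x y : ℝ) : Set (Mat 2 2) := {ξ | ξ.det = x * y ∧ signedSingularSum ξ = x + y}

variable {ξ : Mat 2 2} {x y : ℝ}

lemma signedSingularSum_nonneg (ξ : Mat 2 2) : 0 ≤ signedSingularSum ξ := Real.sqrt_nonneg _

lemma signedSingularSum_sq (ξ : Mat 2 2) :
    signedSingularSum ξ ^ 2 = (ξ 0 0 + ξ 1 1) ^ 2 + (ξ 1 0 - ξ 0 1) ^ 2 :=
  Real.sq_sqrt (by positivity)

lemma continuous_signedSingularSum : Continuous signedSingularSum := by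
  unfold signedSingularSum
  fun_prop

lemma continuous_signedSingularPoly (k : ℝ) : Continuous (signedSingularPoly · k) := by
  have := continuous_signedSingularSum
  unfold signedSingularPoly
  fun_prop

lemma signedSingularPoly_of_mem_well (hξ : ξ ∈ well x y) (k : ℝ) :
    signedSingularPoly ξ k = (k - x) * (k - y) := by
  rw [signedSingularPoly, hξ.1, hξ.2]
  ring

lemma frobenius_norm_sq (ξ : Mat 2 2) : ‖ξ‖ ^ 2 = signedSingularSum ξ ^ 2 - 2 * ξ.det := by
  rw [Matrix.frobenius_norm_def, ← Real.sqrt_eq_rpow, Real.sq_sqrt (by positivity),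
    signedSingularSum_sq, Matrix.det_fin_two]
  simp only [Real.norm_eq_abs, Real.rpow_ofNat, sq_abs, Fin.sum_univ_two]
  ring

lemma isCompact_well (x y : ℝ) : IsCompact (well x y) := by
  refine Metric.isCompact_of_isClosed_isBounded ?_ ?_
  · exact (isClosed_eq (by fun_prop) continuous_const).inter
      (isClosed_eq continuous_signedSingularSum continuous_const)
  · refine isBounded_iff_forall_norm_le.2 ⟨√(x ^ 2 + y ^ 2), fun ξ hξ => Real.le_sqrt_of_sq_le ?_⟩
    rw [frobenius_norm_sq, hξ.1, hξ.2]
    exact le_of_eq (by ring)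

lemma singularValues_add_eq_signedSingularSum (hdet : 0 ≤ ξ.det) :
    singularValues ξ 0 + singularValues ξ 1 = signedSingularSum ξ := by
  have hsum := sum_singularValues_sq ξ
  have hprod := prod_singularValues ξ
  simp only [Fin.sum_univ_two, Fin.prod_univ_two, abs_of_nonneg hdet] at hsum hprod
  rw [Matrix.det_fin_two] at hprod
  rw [← sq_eq_sq₀ (add_nonneg (singularValues_nonneg ξ 0) (singularValues_nonneg ξ 1))
    (signedSingularSum_nonneg ξ), signedSingularSum_sq]
  linear_combination hsum + 2 * hprod

lemma mem_well_iff_singularValues (hx : 0 < x) (hxy : x ≤ y) :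
    ξ ∈ well x y ↔ (singularValues ξ 0, singularValues ξ 1) = (x, y) ∧ 0 < ξ.det := by
  have hpos : 0 < x * y := mul_pos hx (hx.trans_le hxy)
  have hiff : 0 < ξ.det → (ξ ∈ well x y ↔ (singularValues ξ 0, singularValues ξ 1) = (x, y)) := by
    intro hdet
    have hprod : singularValues ξ 0 * singularValues ξ 1 = ξ.det := by
      simpa [Fin.prod_univ_two, abs_of_pos hdet] using prod_singularValues ξ
    rw [Prod.mk.injEq, eq_and_eq_iff_mul_eq_and_add_eq (singularValues_monotone ξ zero_le_one) hxy,
      hprod, singularValues_add_eq_signedSingularSum hdet.le]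
    rfl
  exact ⟨fun h => have hdet := h.1 ▸ hpos; ⟨(hiff hdet).1 h, hdet⟩, fun h => (hiff h.2).2 h.1⟩

lemma setOf_singularValues_eq_well_union {x' y' : ℝ} (hx : 0 < x) (hxy : x ≤ y) (hx' : 0 < x')
    (hxy' : x' ≤ y') :
    {ξ : Mat 2 2 | ((singularValues ξ 0, singularValues ξ 1) = (x, y) ∨
      (singularValues ξ 0, singularValues ξ 1) = (x', y')) ∧ 0 < ξ.det} =
    well x y ∪ well x' y' := by
  ext ξ
  rw [mem_union, mem_well_iff_singularValues hx hxy, mem_well_iff_singularValues hx' hxy',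
    ← or_and_right]
  rfl

end SignedSingularValues

section Laminates

variable {ξ : Mat 2 2} {x y x' y' k : ℝ}

lemma mem_RcoF_well_of_signedSingularSum_le (hdet : ξ.det = x * y) (hxy : x * y ≠ 0)
    (hsum : signedSingularSum ξ ≤ x + y) : ξ ∈ RcoF (well x y) := by
  let D : Mat 2 2 := !![ξ 0 1, 0; ξ 1 1, 0]
  have hcol : 0 < ξ 0 1 ^ 2 + ξ 1 1 ^ 2 := by
    by_contra! h
    have h01 : ξ 0 1 = 0 := by nlinarith
    have h11 : ξ 1 1 = 0 := by nlinarith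
    exact hxy (by rw [← hdet, Matrix.det_fin_two, h01, h11]; ring)
  have hD : D.rank = 1 := by
    refine rank_eq_one_of_det_eq_zero (fun h => hcol.ne' ?_) (by simp [D])
    have h01 : ξ 0 1 = 0 := congrFun (congrFun h 0) 0
    have h11 : ξ 1 1 = 0 := congrFun (congrFun h 1) 0
    simp [h01, h11]
  have hmem_of_root : ∀ t, (ξ 0 1 ^ 2 + ξ 1 1 ^ 2) * (t * t) +
      2 * (ξ 0 0 * ξ 0 1 + ξ 1 0 * ξ 1 1) * t + (signedSingularSum ξ ^ 2 - (x + y) ^ 2) = 0 →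
      ξ + t • D ∈ well x y := by
    intro t ht
    refine ⟨?_, ?_⟩
    · rw [← hdet, Matrix.det_fin_two, Matrix.det_fin_two]
      simp only [D, Matrix.add_apply, Matrix.smul_apply, Matrix.of_apply, Matrix.cons_val,
        smul_eq_mul]
      ring
    · rw [← sq_eq_sq₀ (signedSingularSum_nonneg _) ((signedSingularSum_nonneg ξ).trans hsum),
        signedSingularSum_sq]
      rw [signedSingularSum_sq] at ht
      simp only [D, Matrix.add_apply, Matrix.smul_apply, Matrix.of_apply, Matrix.cons_val,
        smul_eq_mul]
      linear_combination ht
  have hsq : signedSingularSum ξ ^ 2 - (x + y) ^ 2 ≤ 0 :=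
    sub_nonpos.2 (pow_le_pow_left₀ (signedSingularSum_nonneg ξ) hsum 2)
  obtain ⟨s, hs, t, ht, hs_root, ht_root⟩ := exists_nonpos_nonneg_roots hcol hsq
  exact (rankOneConvexSet_RcoF _).mem_of_add_smul_mem hD hs ht
    (subset_RcoF (hmem_of_root s hs_root)) (subset_RcoF (hmem_of_root t ht_root))

lemma exists_rank_one_direction (hk : signedSingularPoly ξ k ≤ 0) :
    ∃ D : Mat 2 2, D.rank = 1 ∧ ∀ t : ℝ, (ξ + t • D).det = ξ.det + t * k ∧
      signedSingularSum (ξ + t • D) = |signedSingularSum ξ + t| := by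
  have hsum := signedSingularSum_sq ξ
  have hdet := Matrix.det_fin_two ξ
  obtain ⟨u₁, u₂, hu, hξu⟩ := exists_unit_vector_inner_eq hsum.le
  obtain ⟨v₁, v₂, hv, hξv⟩ : ∃ v₁ v₂ : ℝ, v₁ ^ 2 + v₂ ^ 2 = 1 ∧
      (ξ 0 0 - ξ 1 1) * v₁ + (ξ 1 0 + ξ 0 1) * v₂ = signedSingularSum ξ - 2 * k := by
    refine exists_unit_vector_inner_eq ?_
    rw [signedSingularPoly] at hk
    linarith
  -- The conformal part `u` of `D` is parallel to that of `ξ`, and the angle between the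
  -- anticonformal parts `v` of `D` and of `ξ` determines the slope of `det`.
  let D : Mat 2 2 := !![(u₁ + v₁) / 2, (v₂ - u₂) / 2; (u₂ + v₂) / 2, (u₁ - v₁) / 2]
  have hD : D.rank = 1 := by
    refine rank_eq_one_of_det_eq_zero (fun h => ?_) ?_
    · have h00 : (u₁ + v₁) / 2 = 0 := congrFun (congrFun h 0) 0
      have h01 : (v₂ - u₂) / 2 = 0 := congrFun (congrFun h 0) 1
      have h10 : (u₂ + v₂) / 2 = 0 := congrFun (congrFun h 1) 0
      have h11 : (u₁ - v₁) / 2 = 0 := congrFun (congrFun h 1) 1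
      have hu₁ : u₁ = 0 := by linarith
      have hu₂ : u₂ = 0 := by linarith
      simp [hu₁, hu₂] at hu
    · rw [Matrix.det_fin_two_of]
      linear_combination (hu - hv) / 4
  refine ⟨D, hD, fun t => ⟨?_, ?_⟩⟩
  · rw [hdet, Matrix.det_fin_two]
    simp only [D, Matrix.add_apply, Matrix.smul_apply, Matrix.of_apply, Matrix.cons_val,
      smul_eq_mul]
    linear_combination t / 2 * (hξu - hξv) + t ^ 2 / 4 * (hu - hv)
  · rw [← sq_eq_sq₀ (signedSingularSum_nonneg _) (abs_nonneg _), sq_abs, signedSingularSum_sq]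
    simp only [D, Matrix.add_apply, Matrix.smul_apply, Matrix.of_apply, Matrix.cons_val,
      smul_eq_mul]
    linear_combination 2 * t * hξu + t ^ 2 * hu - hsum

lemma abs_signedSingularSum_add_le (hk : 0 < k) (hxy : 0 ≤ x * y)
    (hneg : signedSingularPoly ξ k ≤ 0) (hle : (k - x) * (k - y) ≤ signedSingularPoly ξ k) :
    |signedSingularSum ξ + (x * y - ξ.det) / k| ≤ x + y := by
  have hmul : k * (signedSingularSum ξ + (x * y - ξ.det) / k) =
      k ^ 2 + x * y - signedSingularPoly ξ k := by
    rw [signedSingularPoly]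
    field_simp
    ring
  rw [abs_of_nonneg, ← mul_le_mul_iff_right₀ hk, hmul]
  · linarith
  · refine nonneg_of_mul_nonneg_right ?_ hk
    rw [hmul]
    nlinarith

lemma mem_RcoF_well_union (hxy : 0 < x * y) (hk : 0 < k)
    (hdet : x * y ≤ ξ.det) (hdet' : ξ.det ≤ x' * y') (hneg : signedSingularPoly ξ k ≤ 0)
    (hle : (k - x) * (k - y) ≤ signedSingularPoly ξ k)
    (hle' : (k - x') * (k - y') ≤ signedSingularPoly ξ k) :
    ξ ∈ RcoF (well x y ∪ well x' y') := by
  have hxy' : 0 < x' * y' := hxy.trans_le (hdet.trans hdet')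
  obtain ⟨D, hD, hline⟩ := exists_rank_one_direction hneg
  have hend : ∀ {p q : ℝ}, 0 < p * q → (k - p) * (k - q) ≤ signedSingularPoly ξ k →
      ξ + ((p * q - ξ.det) / k) • D ∈ RcoF (well p q) := by
    intro p q hpq hle
    refine mem_RcoF_well_of_signedSingularSum_le ?_ hpq.ne' ?_
    · rw [(hline _).1, div_mul_cancel₀ _ hk.ne', add_sub_cancel]
    · rw [(hline _).2]
      exact abs_signedSingularSum_add_le hk hpq.le hneg hle
  exact (rankOneConvexSet_RcoF _).mem_of_add_smul_mem hD
    (div_nonpos_of_nonpos_of_nonneg (sub_nonpos.2 hdet) hk.le)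
    (div_nonneg (sub_nonneg.2 hdet') hk.le)
    (RcoF_mono subset_union_left (hend hxy hle)) (RcoF_mono subset_union_right (hend hxy' hle'))

lemma well_subset_interior_RcoF {p q : ℝ} (hxy : 0 < x * y) (hk : 0 < k)
    (hpq : x * y < p * q) (hpq' : p * q < x' * y') (hneg : (k - p) * (k - q) < 0)
    (hlt : (k - x) * (k - y) < (k - p) * (k - q))
    (hlt' : (k - x') * (k - y') < (k - p) * (k - q)) :
    well p q ⊆ interior (RcoF (well x y ∪ well x' y')) := by
  intro ξ hξ
  rw [← signedSingularPoly_of_mem_well hξ k] at hneg hlt hlt'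
  rw [← hξ.1] at hpq hpq'
  have hdet_cont : Continuous fun η : Mat 2 2 => η.det := by fun_prop
  have hpoly_cont := (continuous_signedSingularPoly k).continuousAt (x := ξ)
  rw [mem_interior_iff_mem_nhds]
  filter_upwards [hdet_cont.continuousAt.eventually_const_lt hpq,
    hdet_cont.continuousAt.eventually_lt_const hpq', hpoly_cont.eventually_lt_const hneg,
    hpoly_cont.eventually_const_lt hlt, hpoly_cont.eventually_const_lt hlt'] with η hlower
    hupper hneg hle hle'
  exact mem_RcoF_well_union hxy hk hlower.le hupper.le hneg.le hle.le hle'.le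

lemma well_subset_interior_RcoF_of_lt_left {a₁ a₂ b₁ b₂ c : ℝ} (ha₁ : 0 < a₁) (hac : a₁ < c)
    (hcb : c < b₁) (hba : b₁ < a₂) (hb₂ : a₂ < b₂) :
    well c a₂ ⊆ interior (RcoF (well a₁ a₂ ∪ well b₁ b₂)) := by
  have hnear : ∀ᶠ k in nhdsWithin a₂ (Iio a₂), (k - b₁) * (k - b₂) < (k - c) * (k - a₂) := by
    refine ContinuousAt.eventually_lt ?_ ?_ ?_ |>.filter_mono nhdsWithin_le_nhds
    · fun_prop
    · fun_prop
    · nlinarith [mul_pos (sub_pos.2 hba) (sub_pos.2 hb₂)]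
  obtain ⟨k, hlt, hck, hka⟩ :=
    (hnear.and (Ioo_mem_nhdsLT (hcb.trans hba))).exists
  exact well_subset_interior_RcoF (k := k) (by nlinarith) (by linarith)
    (by nlinarith) (by nlinarith) (by nlinarith) (by nlinarith) hlt

lemma well_subset_interior_RcoF_of_lt_right {a₁ a₂ b₁ b₂ c : ℝ} (ha₁ : 0 < a₁) (hab : a₁ < b₁)
    (hba : b₁ < a₂) (hac : a₂ < c) (hcb : c < b₂) :
    well b₁ c ⊆ interior (RcoF (well a₁ a₂ ∪ well b₁ b₂)) := by
  have hnear : ∀ᶠ k in nhdsWithin b₁ (Ioi b₁), (k - a₁) * (k - a₂) < (k - b₁) * (k - c) := by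
    refine ContinuousAt.eventually_lt ?_ ?_ ?_ |>.filter_mono nhdsWithin_le_nhds
    · fun_prop
    · fun_prop
    · nlinarith [mul_pos (sub_pos.2 hab) (sub_pos.2 hba)]
  obtain ⟨k, hlt, hbk, hkc⟩ :=
    (hnear.and (Ioo_mem_nhdsGT (hba.trans hac))).exists
  exact well_subset_interior_RcoF (k := k) (by nlinarith) (by linarith)
    (by nlinarith) (by nlinarith) (by nlinarith) hlt (by nlinarith)

end Laminates

theorem stmt17 (a₁ a₂ b₁ b₂ δ : ℝ) (ha₁ : 0 < a₁) (hab : a₁ < b₁) (hba : b₁ < a₂)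
    (hb₂ : a₂ < b₂) (hδ : 0 < δ) (hδ₁ : a₁ + δ < b₁) (hδ₂ : a₂ < b₂ - δ)
    (hδ₃ : δ < b₁ - a₁)
    (E Eδ : Set (Mat 2 2))
    (hE : E = {ξ : Mat 2 2 | ((singularValues ξ 0, singularValues ξ 1) = (a₁, a₂) ∨
      (singularValues ξ 0, singularValues ξ 1) = (b₁, b₂)) ∧ 0 < ξ.det})
    (hEδ : Eδ = {ξ : Mat 2 2 |
      ((singularValues ξ 0, singularValues ξ 1) = (a₁ + δ, a₂) ∨
      (singularValues ξ 0, singularValues ξ 1) = (b₁, b₂ - δ)) ∧ 0 < ξ.det}) :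
    RcoF Eδ ⊆ interior (RcoF E) := by
  rw [hE, hEδ, setOf_singularValues_eq_well_union ha₁ (by linarith) (by linarith) (by linarith),
    setOf_singularValues_eq_well_union (by linarith) (by linarith) (by linarith) (by linarith)]
  exact RcoF_subset_interior_RcoF_of_isCompact ((isCompact_well _ _).union (isCompact_well _ _))
    (union_subset
      (well_subset_interior_RcoF_of_lt_left ha₁ (by linarith) hδ₁ hba hb₂)
      (well_subset_interior_RcoF_of_lt_right ha₁ hab hba hδ₂ (by linarith)))

end Statements
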